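/- arXiv:2404.02355 — 2 statements merged into one kernel-verified Lean document; each statement's English description precedes it below -/
import Mathlib

section
/- Let X be a complex Hilbert space, let A and B be closed linear relations in X forming a dual pair (A ⊆ B*), and suppose that (A*)_s(f) = B_s(f) for all f ∈ D(B) and (B*)_s(f) = A_s(f) for all f ∈ D(A). Then D(B*) decomposes as the orthogonal direct sum D(B*) = D(A) ⊕_B N(1 + A*B*), where the orthogonality is with respect to the graph inner product ⟨f,g⟩_{+B} = ⟨f,g⟩ + ⟨(B*)_s(f),(B*)_s(g)⟩ on D(B*). -/
/-!
The graph of `A` is a closed subspace of the Hilbert space `X ⊕ X`. Given `f ∈ D(B*)`, pick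
`(f, y) ∈ B*` and project it orthogonally onto the graph of `A`: `(f, y) = (g, k) + (h, l)`.
Since `A ⊆ B*`, the remainder `(h, l)` lies in `B*`, and its orthogonality to `A` says exactly
that `(l, -h) ∈ A*`, so `h ∈ N(1 + A*B*)` (`exists_decomp_of_isClosed`).

For the orthogonality, let `g ∈ D(A)` and let `(h, l) ∈ B*`, `(l, -h) ∈ A*`. The vector
`k = (B*)_s g = A_s g` satisfies `(g, k) ∈ A`, whence `⟪h, g⟫ + ⟪l, k⟫ = 0`. As `l` and
`(B*)_s h` differ by an element of `B*(0)`, to which `k` is orthogonal, `l` may be replaced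
by `(B*)_s h`. That operator parts take values in the relation is `opPart_spec`.
-/

local notation "⟪" x ", " y "⟫" => @inner ℂ _ _ x y

noncomputable section

variable {X : Type*} [NormedAddCommGroup X] [InnerProductSpace ℂ X]

/-- The adjoint `T*` of a linear relation `T ⊆ X × X`:
`T* = {(f,g) : ⟪g,x⟫ = ⟪f,y⟫ for all (x,y) ∈ T}`. -/
def adjRel (T : Submodule ℂ (X × X)) : Submodule ℂ (X × X) where
  carrier := {p | ∀ q ∈ T, ⟪p.2, q.1⟫ = ⟪p.1, q.2⟫}
  add_mem' := by
    intro p p' hp hp' q hq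
    simp only [Prod.fst_add, Prod.snd_add, inner_add_left, hp q hq, hp' q hq]
  zero_mem' := by intro q hq; simp
  smul_mem' := by
    intro c p hp q hq
    simp only [Prod.smul_fst, Prod.smul_snd, inner_smul_left, hp q hq]

/-- The domain `D(T)` of a linear relation. -/
def relDom (T : Submodule ℂ (X × X)) : Submodule ℂ X := T.map (LinearMap.fst ℂ X X)

/-- The multivalued part `T(0) = {y : (0,y) ∈ T}` of a linear relation. -/
def relMul (T : Submodule ℂ (X × X)) : Submodule ℂ X := T.comap (LinearMap.inr ℂ X X)

/-- The null space `N(T) = {x : (x,0) ∈ T}` of a linear relation. -/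
def relKer (T : Submodule ℂ (X × X)) : Submodule ℂ X := T.comap (LinearMap.inl ℂ X X)

/-- The operator part `T_s` of a (closed) linear relation, sending `f ∈ D(T)` to the unique
element of `T(f)` orthogonal to `T(0)` (junk value `0` outside `D(T)`). -/
def opPart (T : Submodule ℂ (X × X)) (f : X) : X :=
  @dite X (∃ y, (f, y) ∈ T ∧ y ∈ (relMul T)ᗮ) (Classical.dec _)
    (fun h => h.choose) (fun _ => 0)

/-- The composition `S ∘ T = {(x,z) : ∃ y, (x,y) ∈ T and (y,z) ∈ S}` of linear relations. -/
def relComp (S T : Submodule ℂ (X × X)) : Submodule ℂ (X × X) where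
  carrier := {p | ∃ y, (p.1, y) ∈ T ∧ (y, p.2) ∈ S}
  add_mem' := by
    rintro p p' ⟨y, h1, h2⟩ ⟨y', h1', h2'⟩
    exact ⟨y + y', T.add_mem h1 h1', S.add_mem h2 h2'⟩
  zero_mem' := ⟨0, T.zero_mem, S.zero_mem⟩
  smul_mem' := by
    rintro c p ⟨y, h1, h2⟩
    exact ⟨c • y, T.smul_mem c h1, S.smul_mem c h2⟩

/-- `N(1 + R) = {x : (x, -x) ∈ R}` for a linear relation `R`. -/
def relKerOnePlus (R : Submodule ℂ (X × X)) : Submodule ℂ X :=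
  R.comap ((LinearMap.id : X →ₗ[ℂ] X).prod (-LinearMap.id))

/-- The dimension of the quotient `U / V` (for submodules `V ⊆ U`). -/
def quotDim (U V : Submodule ℂ X) : Cardinal :=
  Module.rank ℂ (↥U ⧸ V.comap U.subtype)

/-- The relation `S = [[0, A], [B, 0]]` in `X² × X²` associated with a dual pair `{A, B}`:
`S = {((x₁,x₂),(y₁,y₂)) : (x₁,y₂) ∈ B and (x₂,y₁) ∈ A}`. -/
def dualS (A B : Submodule ℂ (X × X)) : Submodule ℂ ((X × X) × (X × X)) where
  carrier := {p | (p.1.1, p.2.2) ∈ B ∧ (p.1.2, p.2.1) ∈ A}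
  add_mem' := by
    rintro p p' ⟨h1, h2⟩ ⟨h1', h2'⟩
    exact ⟨B.add_mem h1 h1', A.add_mem h2 h2'⟩
  zero_mem' := ⟨B.zero_mem, A.zero_mem⟩
  smul_mem' := by
    rintro c p ⟨h1, h2⟩
    exact ⟨B.smul_mem c h1, A.smul_mem c h2⟩

/-- The adjoint of a linear relation in `X × X`, where `X × X` carries the product
inner product `⟪(x₁,x₂),(u₁,u₂)⟫ = ⟪x₁,u₁⟫ + ⟪x₂,u₂⟫`. -/
def adjRel2 (S : Submodule ℂ ((X × X) × (X × X))) : Submodule ℂ ((X × X) × (X × X)) where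
  carrier := {p | ∀ q ∈ S,
    ⟪p.2.1, q.1.1⟫ + ⟪p.2.2, q.1.2⟫ = ⟪p.1.1, q.2.1⟫ + ⟪p.1.2, q.2.2⟫}
  add_mem' := by
    intro p p' hp hp' q hq
    simp only [Prod.fst_add, Prod.snd_add, inner_add_left]
    rw [show ∀ a b c d : ℂ, a + b + (c + d) = a + c + (b + d) by intros; ring,
      hp q hq, hp' q hq]; ring
  zero_mem' := by intro q hq; simp
  smul_mem' := by
    intro c p hp q hq
    simp only [Prod.smul_fst, Prod.smul_snd, inner_smul_left, ← mul_add, hp q hq]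

/-- For a relation `R` on `X × X` and `c : ℂ`, the subspace `{f : (f, c • f) ∈ R}`;
for `R = S*` and `c = ∓i` this is the deficiency space `N(S* ± i)`. -/
def eigenSp (R : Submodule ℂ ((X × X) × (X × X))) (c : ℂ) : Submodule ℂ (X × X) :=
  R.comap ((LinearMap.id : (X × X) →ₗ[ℂ] (X × X)).prod (c • LinearMap.id))


/-- A closed relation has a closed multivalued part, so subtracting from any `y ∈ T(f)` its
orthogonal projection onto `T(0)` shows that `T_s f` is not a junk value. -/
lemma opPart_spec [CompleteSpace X] {T : Submodule ℂ (X × X)}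
    (hT : IsClosed (T : Set (X × X))) {f : X} (hf : f ∈ relDom T) :
    (f, opPart T f) ∈ T ∧ opPart T f ∈ (relMul T)ᗮ := by
  have hex : ∃ y, (f, y) ∈ T ∧ y ∈ (relMul T)ᗮ := by
    obtain ⟨⟨f', y⟩, hy, rfl⟩ := hf
    have hcl : IsClosed (relMul T : Set X) :=
      hT.preimage (continuous_const.prodMk continuous_id : Continuous fun y : X => ((0 : X), y))
    haveI : CompleteSpace (relMul T) := hcl.completeSpace_coe
    obtain ⟨u, hu, v, hv, huv⟩ := (relMul T).exists_add_mem_mem_orthogonal y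
    refine ⟨v, ?_, hv⟩
    have h0 : ((0 : X), u) ∈ T := hu
    have := T.sub_mem hy h0
    simpa [huv] using this
  unfold opPart
  rw [dif_pos hex]
  exact hex.choose_spec

lemma isClosed_adjRel (T : Submodule ℂ (X × X)) : IsClosed (adjRel T : Set (X × X)) := by
  have : (adjRel T : Set (X × X)) = ⋂ q ∈ T, {p : X × X | ⟪p.2, q.1⟫ = ⟪p.1, q.2⟫} := by
    ext p
    simp only [Set.mem_iInter]
    rfl
  rw [this]
  exact isClosed_biInter fun q _ => isClosed_eq (by fun_prop) (by fun_prop)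

/-- Orthogonal projection onto the graph of `A` in `X ⊕ X`; `WithLp 2 (X × X)` supplies the
Hilbert space structure, as `X × X` itself carries the sup norm. -/
lemma exists_decomp_of_isClosed [CompleteSpace X] {A : Submodule ℂ (X × X)}
    (hA : IsClosed (A : Set (X × X))) (f y : X) :
    ∃ g k h l : X, (g, k) ∈ A ∧ (l, -h) ∈ adjRel A ∧ f = g + h ∧ y = k + l := by
  let A' : Submodule ℂ (WithLp 2 (X × X)) :=
    A.comap (WithLp.linearEquiv 2 ℂ (X × X)).toLinearMap
  have hcl : IsClosed (A' : Set (WithLp 2 (X × X))) :=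
    hA.preimage (WithLp.prod_continuous_ofLp 2 X X)
  haveI : CompleteSpace A' := hcl.completeSpace_coe
  obtain ⟨u, hu, v, hv, huv⟩ := A'.exists_add_mem_mem_orthogonal (WithLp.toLp 2 (f, y))
  refine ⟨u.fst, u.snd, v.fst, v.snd, hu, ?_, congrArg WithLp.fst huv, congrArg WithLp.snd huv⟩
  intro q hq
  have h := (A'.mem_orthogonal' v).1 hv (WithLp.toLp 2 q) hq
  rw [WithLp.prod_inner_apply] at h
  change ⟪v.fst, q.1⟫ + ⟪v.snd, q.2⟫ = 0 at h
  change ⟪-v.fst, q.1⟫ = ⟪v.snd, q.2⟫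
  rw [inner_neg_left]
  linear_combination -h

/-- Lemma 2.4, eq. (2.2). `D(B*) = D(A) ⊕_B N(1 + A*B*)`, an orthogonal
direct sum with respect to the graph inner product
`⟪f,g⟫₊ᵦ = ⟪f,g⟫ + ⟪(B*)_s f, (B*)_s g⟫` on `D(B*)`. -/
theorem domAdjB_decomposition [CompleteSpace X] (A B : Submodule ℂ (X × X))
    (hA : IsClosed (A : Set (X × X))) (hB : IsClosed (B : Set (X × X)))
    (hdual : A ≤ adjRel B)
    (hopB : ∀ f ∈ relDom B, opPart (adjRel A) f = opPart B f)
    (hopA : ∀ f ∈ relDom A, opPart (adjRel B) f = opPart A f) :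
    (∀ f ∈ relDom (adjRel B), ∃ g ∈ relDom A,
        ∃ h ∈ relKerOnePlus (relComp (adjRel A) (adjRel B)), f = g + h) ∧
    (∀ g ∈ relDom A, ∀ h ∈ relKerOnePlus (relComp (adjRel A) (adjRel B)),
        ⟪g, h⟫ + ⟪opPart (adjRel B) g, opPart (adjRel B) h⟫ = 0) := by
  constructor
  · rintro _ ⟨⟨f, y⟩, hy, rfl⟩
    obtain ⟨g, k, h, l, hgk, hlh, rfl, rfl⟩ := exists_decomp_of_isClosed hA f y
    refine ⟨g, ⟨(g, k), hgk, rfl⟩, h, ⟨l, ?_, hlh⟩, rfl⟩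
    simpa using (adjRel B).sub_mem hy (hdual hgk)
  · rintro g hg h ⟨l, hhl, hlh⟩
    change (h, l) ∈ adjRel B at hhl
    change (l, -h) ∈ adjRel A at hlh
    have hgB : g ∈ relDom (adjRel B) := Submodule.map_mono hdual hg
    have hk := (opPart_spec hA hg).1
    rw [← hopA g hg] at hk
    have hk' := (opPart_spec (isClosed_adjRel B) hgB).2
    have hh := (opPart_spec (isClosed_adjRel B) (f := h) ⟨(h, l), hhl, rfl⟩).1
    have hmul : l - opPart (adjRel B) h ∈ relMul (adjRel B) := by
      change ((0 : X), l - opPart (adjRel B) h) ∈ adjRel B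
      simpa using (adjRel B).sub_mem hhl hh
    have h1 := (Submodule.mem_orthogonal' _ _).1 hk' _ hmul
    rw [inner_sub_right] at h1
    have h2 : ⟪-h, g⟫ = ⟪l, opPart (adjRel B) g⟫ := hlh _ hk
    have h3 := congrArg (starRingEnd ℂ) h2
    rw [inner_conj_symm, inner_conj_symm, inner_neg_right] at h3
    linear_combination -h1 - h3

end
end

section
/- Let X be a complex Hilbert space and let A and B be closed linear relations in X forming a dual pair (A ⊆ B*) such that (A*)_s(f) = B_s(f) for all f ∈ D(B), (B*)_s(f) = A_s(f) for all f ∈ D(A), B*(0) ∩ N(A*) = {0}, and A*(0) ∩ N(B*) = {0}. Let S be the linear relation in X × X defined by S = {((x₁,x₂),(y₁,y₂)) : (x₁,y₂) ∈ B and (x₂,y₁) ∈ A}. Then S is self-adjoint (S = S*) if and only if A = B* (equivalently, B = A*). -/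
/-! Splitting the defining identity of the adjoint into its `A`- and `B`-components gives
`S* = [[0, B*], [A*, 0]]` (`adjRel2_dualS`), so `S = S*` means `A = B*` and `B = A*`.
The second equation follows from the first, because a closed relation equals its double adjoint
(`adjRel_adjRel_of_isClosed`): up to the isometry `(u, v) ↦ (v, -u)`, taking the adjoint is
taking the orthogonal complement in the Hilbert space `X ⊕ X`. -/

local notation "⟪" x ", " y "⟫" => @inner ℂ _ _ x y

noncomputable section

variable {X : Type*} [NormedAddCommGroup X] [InnerProductSpace ℂ X]

/-- The adjoint of `[[0, A], [B, 0]]` is `[[0, B*], [A*, 0]]`. -/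
theorem adjRel2_dualS (A B : Submodule ℂ (X × X)) :
    adjRel2 (dualS A B) = dualS (adjRel B) (adjRel A) := by
  ext p
  constructor
  · intro h
    refine ⟨fun q hq => ?_, fun q hq => ?_⟩
    · simpa using h ((0, q.1), (q.2, 0)) ⟨B.zero_mem, hq⟩
    · simpa using h ((q.1, 0), (0, q.2)) ⟨hq, A.zero_mem⟩
  · rintro ⟨h1, h2⟩ q ⟨hq1, hq2⟩
    have e1 := h1 _ hq2
    have e2 := h2 _ hq1
    dsimp only at e1 e2
    rw [e1, e2, add_comm]

theorem dualS_inj {A B A' B' : Submodule ℂ (X × X)} :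
    dualS A B = dualS A' B' ↔ A = A' ∧ B = B' := by
  constructor
  · intro h
    constructor
    · ext q
      have := SetLike.ext_iff.mp h ((0, q.1), (q.2, 0))
      exact ⟨fun hq => (this.mp ⟨B.zero_mem, hq⟩).2, fun hq => (this.mpr ⟨B'.zero_mem, hq⟩).2⟩
    · ext q
      have := SetLike.ext_iff.mp h ((q.1, 0), (0, q.2))
      exact ⟨fun hq => (this.mp ⟨hq, A.zero_mem⟩).1, fun hq => (this.mpr ⟨hq, A'.zero_mem⟩).1⟩
  · rintro ⟨rfl, rfl⟩
    rfl

/-- A closed linear relation in a Hilbert space equals its double adjoint. -/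
theorem adjRel_adjRel_of_isClosed [CompleteSpace X] (T : Submodule ℂ (X × X))
    (hT : IsClosed (T : Set (X × X))) : adjRel (adjRel T) = T := by
  apply le_antisymm
  · intro p hp
    -- `X × X` carries the sup norm, so orthogonality is used in its `L²` version.
    let K : Submodule ℂ (WithLp 2 (X × X)) :=
      T.comap (WithLp.linearEquiv 2 ℂ (X × X)).toLinearMap
    have hK : IsClosed (K : Set (WithLp 2 (X × X))) :=
      hT.preimage (WithLp.prod_continuous_ofLp 2 X X)
    have hmem : WithLp.toLp 2 p ∈ Kᗮᗮ := by
      rw [Submodule.mem_orthogonal']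
      intro v hv
      have hv' : (v.snd, -v.fst) ∈ adjRel T := by
        intro q hq
        have h := (Submodule.mem_orthogonal' _ _).mp hv (WithLp.toLp 2 q) hq
        rw [WithLp.prod_inner_apply] at h
        simp only [inner_neg_left]
        exact neg_eq_of_add_eq_zero_right h
      have h := hp _ hv'
      rw [WithLp.prod_inner_apply]
      simp only [inner_neg_right] at h
      change ⟪p.1, v.fst⟫ + ⟪p.2, v.snd⟫ = 0
      rw [h, add_neg_cancel]
    rw [Submodule.orthogonal_orthogonal_eq_closure, hK.submodule_topologicalClosure_eq] at hmem
    exact hmem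
  · intro p hp q hq
    have h := hq p hp
    rw [← inner_conj_symm, ← h, inner_conj_symm]

/-- Proposition 2.10(ii). Under the stated hypotheses, `S = [[0,A],[B,0]]`
is self-adjoint if and only if `A = B*` (equivalently, `B = A*`). -/
theorem dualS_selfadjoint_iff [CompleteSpace X] (A B : Submodule ℂ (X × X))
    (hA : IsClosed (A : Set (X × X))) (hB : IsClosed (B : Set (X × X)))
    (hdual : A ≤ adjRel B)
    (hopB : ∀ f ∈ relDom B, opPart (adjRel A) f = opPart B f)
    (hopA : ∀ f ∈ relDom A, opPart (adjRel B) f = opPart A f)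
    (hmul1 : relMul (adjRel B) ⊓ relKer (adjRel A) = ⊥)
    (hmul2 : relMul (adjRel A) ⊓ relKer (adjRel B) = ⊥) :
    adjRel2 (dualS A B) = dualS A B ↔ A = adjRel B := by
  rw [adjRel2_dualS, dualS_inj]
  constructor
  · exact fun h => h.1.symm
  · intro h
    refine ⟨h.symm, ?_⟩
    rw [h, adjRel_adjRel_of_isClosed B hB]

end
end
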